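/- Let H and K be complex Hilbert spaces, n ∈ ℕ, V₁,…,Vₙ ∈ B(H,K), and let b ∈ B(K) be an operator such that b (V_l V_k*) = (V_l V_k*) b for all k, l ∈ {1,…,n}. Then for all vectors ξ₁,…,ξₙ ∈ K one has ‖Σ_{k=1}^n V_k* b ξ_k‖ ≤ ‖b‖ · ‖Σ_{k=1}^n V_k* ξ_k‖. -/

import Mathlib

/-- If `b ∈ B(K)` commutes with all the operators `V l ∘ (V k)*`,
then `‖Σ_k (V k)* (b (ξ k))‖ ≤ ‖b‖ · ‖Σ_k (V k)* (ξ k)‖`. -/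
theorem statement1
    {H K : Type*}
    [NormedAddCommGroup H] [InnerProductSpace ℂ H] [CompleteSpace H]
    [NormedAddCommGroup K] [InnerProductSpace ℂ K] [CompleteSpace K]
    (n : ℕ) (V : Fin n → (H →L[ℂ] K)) (b : K →L[ℂ] K)
    (hcomm : ∀ k l : Fin n, Commute b ((V l) ∘L (ContinuousLinearMap.adjoint (V k))))
    (ξ : Fin n → K) :
    ‖∑ k, ContinuousLinearMap.adjoint (V k) (b (ξ k))‖ ≤
      ‖b‖ * ‖∑ k, ContinuousLinearMap.adjoint (V k) (ξ k)‖ := by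
  let L := PiLp 2 (fun _ : Fin n => K)
  let e := PiLp.continuousLinearEquiv 2 ℂ (fun _ : Fin n => K)
  let C : H →L[ℂ] L := (e.symm : (Fin n → K) →L[ℂ] L) ∘L ContinuousLinearMap.pi V
  let B : L →L[ℂ] L := (e.symm : (Fin n → K) →L[ℂ] L) ∘L
    ContinuousLinearMap.pi (fun k => b ∘L PiLp.proj 2 (fun _ : Fin n => K) k)
  have hC : ∀ h k, C h k = V k h := fun h k => rfl
  have hB : ∀ x k, B x k = b (x k) := fun x k => rfl
  have hA : ∀ x : L, ContinuousLinearMap.adjoint C x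
      = ∑ k, ContinuousLinearMap.adjoint (V k) (x k) := by
    intro x
    refine ext_inner_right ℂ fun h => ?_
    rw [ContinuousLinearMap.adjoint_inner_left, PiLp.inner_apply, sum_inner]
    simp only [hC, ContinuousLinearMap.adjoint_inner_left]
  let P : L →L[ℂ] L := C ∘L ContinuousLinearMap.adjoint C
  have hP0 : 0 ≤ P := by
    rw [ContinuousLinearMap.nonneg_iff_isPositive]
    exact ContinuousLinearMap.isPositive_self_comp_adjoint C
  have hPB : Commute P B := by
    refine ContinuousLinearMap.ext fun x => ?_
    refine PiLp.ext fun l => ?_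
    change V l (ContinuousLinearMap.adjoint C (B x)) = b (V l (ContinuousLinearMap.adjoint C x))
    rw [hA, hA, map_sum, map_sum, map_sum]
    refine Finset.sum_congr rfl fun k _ => ?_
    exact (DFunLike.congr_fun (hcomm k l).eq (x k)).symm
  let S : L →L[ℂ] L := CFC.sqrt P
  have hSB : Commute S B := by
    exact hPB.cfcₙ_nnreal _
  have hS0 : 0 ≤ S := CFC.sqrt_nonneg P
  have hSS : S * S = P := CFC.sqrt_mul_sqrt_self P hP0
  have hSa : ContinuousLinearMap.adjoint S = S :=
    (IsSelfAdjoint.of_nonneg hS0)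
  have hn : ∀ x : L, ‖S x‖ = ‖ContinuousLinearMap.adjoint C x‖ := by
    intro x
    have h1 : inner ℂ (S x) (S x) = inner ℂ (P x) x := by
      rw [← hSS, ← ContinuousLinearMap.adjoint_inner_left, hSa]; rfl
    have h2 : inner ℂ (ContinuousLinearMap.adjoint C x) (ContinuousLinearMap.adjoint C x)
        = inner ℂ (P x) x := by
      rw [ContinuousLinearMap.adjoint_inner_right]; rfl
    rw [@norm_eq_sqrt_re_inner ℂ, @norm_eq_sqrt_re_inner ℂ, h1, h2]
  have hBn : ∀ x : L, ‖B x‖ ≤ ‖b‖ * ‖x‖ := by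
    intro x
    refine le_of_sq_le_sq ?_ (by positivity)
    rw [mul_pow, PiLp.norm_sq_eq_of_L2, PiLp.norm_sq_eq_of_L2, Finset.mul_sum]
    refine Finset.sum_le_sum fun k _ => ?_
    rw [hB, ← mul_pow]
    exact pow_le_pow_left₀ (norm_nonneg _) (b.le_opNorm _) 2
  let x : L := WithLp.toLp 2 ξ
  have e1 := hA (B x)
  have e2 := hA x
  have e3 : S (B x) = B (S x) := DFunLike.congr_fun hSB.eq x
  change ‖∑ k, ContinuousLinearMap.adjoint (V k) (B x k)‖ ≤
      ‖b‖ * ‖∑ k, ContinuousLinearMap.adjoint (V k) (x k)‖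
  rw [← e1, ← e2, ← hn, ← hn, e3]
  exact hBn _
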